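/- arXiv:2604.11475 — 5 statements merged into one kernel-verified Lean document; each statement's English description precedes it below -/
import Mathlib

section
/- Let K be a field, R = K[x_1,…,x_n], and let I and J be monomial ideals of R. Suppose that for every subset S ⊆ {1,…,n} such that the monomial prime ideal p = (x_i : i ∈ S) belongs to Ass_R(R/I), one has J(p) ⊆ I(p), where A(p) denotes the ideal of K[x_i : i ∈ S] generated by the image of A under the K-algebra homomorphism sending x_i ↦ x_i for i ∈ S and x_j ↦ 1 for j ∉ S. Then J ⊆ I. -/
open MvPolynomial

/-- A monomial ideal: an ideal generated by monomials. -/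
def IsMonomialIdeal {K : Type*} [Field K] {n : ℕ} (I : Ideal (MvPolynomial (Fin n) K)) : Prop :=
  ∃ S : Set (Fin n →₀ ℕ), I = Ideal.span ((fun d => monomial d (1 : K)) '' S)

/-- The monomial localization map `π_S : K[x_1,…,x_n] → K[x_i : i ∈ S]` sending
`x_i ↦ x_i` for `i ∈ S` and `x_j ↦ 1` for `j ∉ S`. -/
noncomputable def monLocMap (K : Type*) [Field K] {n : ℕ} (S : Finset (Fin n)) :
    MvPolynomial (Fin n) K →ₐ[K] MvPolynomial {i // i ∈ S} K :=
  aeval fun i => if h : i ∈ S then X ⟨i, h⟩ else 1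

/-!
The exponents of the monomials in `I` form an upper set `U` of `σ →₀ ℕ`. Suppose `x ^ d ∈ J \ I`.
By Dickson's lemma there is a multiple `x ^ e ∉ I` of `x ^ d` for which the colon `I : x ^ e` is
maximal, and by maximality it is generated by the variables in some `S`, so it is an associated
prime of `I`. Since `J(p) ⊆ I(p)` for this prime, some generator `x ^ a` of `I` satisfies
`a i ≤ d i ≤ e i` for `i ∈ S`. Hence the part of `x ^ a` outside `S` multiplies `x ^ e` into `I`
without involving any variable of `S`, a contradiction.
-/

section UpperSet

theorem wellFoundedLT_upperSet (α : Type*) [Preorder α] [WellQuasiOrderedLE α] :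
    WellFoundedLT (UpperSet α) := by
  refine ⟨RelEmbedding.wellFounded_iff_isEmpty.2 ⟨fun f => ?_⟩⟩
  have f_strictAnti : StrictAnti f := fun _ _ hmn => f.map_rel_iff.2 hmn
  have exists_new (k : ℕ) : ∃ x ∈ f (k + 1), x ∉ f k :=
    Set.not_subset.1 (f_strictAnti k.lt_succ_self).not_ge
  choose x hx_mem hx_notMem using exists_new
  obtain ⟨k, l, hkl, hle⟩ := wellQuasiOrdered_le x
  exact hx_notMem l (f_strictAnti.antitone hkl ((f (k + 1)).upper hle (hx_mem k)))

variable {M : Type*} [AddCommMonoid M] [PartialOrder M] [CanonicallyOrderedAdd M]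

/-- The colon `U : e` of an upper set `U` of an additive monoid, the set of all `w` with
`w + e ∈ U`. If `U` is the set of exponents of a monomial ideal `I`, then `U : e` is the set of
exponents of `I : x ^ e`. -/
def upperSetColon (U : UpperSet M) (e : M) : UpperSet M where
  carrier := {w | w + e ∈ U}
  upper' _ _ hle hmem := U.upper (add_le_add_left hle e) hmem

@[simp]
theorem mem_upperSetColon {U : UpperSet M} {e w : M} : w ∈ upperSetColon U e ↔ w + e ∈ U :=
  Iff.rfl

theorem upperSetColon_antitone (U : UpperSet M) : Antitone (upperSetColon U) :=
  fun _ _ hle w hw => U.upper (add_le_add_right hle w) hw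

/-- The counterpart for upper sets of the fact that a maximal annihilator is prime. -/
theorem exists_ge_coe_addSubmonoid_eq_compl_upperSetColon [WellQuasiOrderedLE M]
    {U : UpperSet M} {d : M} (hd : d ∉ U) :
    ∃ e, d ≤ e ∧ ∃ N : AddSubmonoid M, (N : Set M) = (upperSetColon U e : Set M)ᶜ := by
  have := wellFoundedLT_upperSet M
  obtain ⟨e, ⟨hde, he⟩, hmin⟩ := exists_minimalFor_of_wellFoundedLT
    (fun e => d ≤ e ∧ e ∉ U) (upperSetColon U) ⟨d, le_rfl, hd⟩
  have colon_stable {v : M} (hv : v + e ∉ U) : upperSetColon U e ≤ upperSetColon U (v + e) :=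
    hmin ⟨hde.trans le_add_self, hv⟩ (upperSetColon_antitone U le_add_self)
  refine ⟨e, hde, { carrier := (upperSetColon U e : Set M)ᶜ, zero_mem' := ?_, add_mem' := ?_ }, rfl⟩
  · intro w v hw hv hwv
    have w_mem_colon : w ∈ upperSetColon U (v + e) := by
      rwa [mem_upperSetColon, ← add_assoc]
    exact hw (colon_stable hv w_mem_colon)
  · simpa using he

end UpperSet

section Finsupp

variable {σ : Type*}

theorem mem_iff_single_mem_of_isLowerSet {N : AddSubmonoid (σ →₀ ℕ)}
    (hN : IsLowerSet (N : Set (σ →₀ ℕ))) {w : σ →₀ ℕ} :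
    w ∈ N ↔ ∀ i, w i ≠ 0 → Finsupp.single i 1 ∈ N := by
  refine ⟨fun hw i hi => hN ?_ hw, fun h => ?_⟩
  · exact Finsupp.single_le_iff.2 (Nat.one_le_iff_ne_zero.2 hi)
  · rw [← w.sum_single]
    refine sum_mem fun i hi => ?_
    simpa using N.nsmul_mem (h i (Finsupp.mem_support_iff.1 hi)) (w i)

theorem exists_ge_forall_add_mem_iff [Finite σ] {U : UpperSet (σ →₀ ℕ)} {d : σ →₀ ℕ}
    (hd : d ∉ U) :
    ∃ e, d ≤ e ∧ ∃ S : Finset σ, ∀ w, w + e ∈ U ↔ ∃ i ∈ S, w i ≠ 0 := by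
  obtain ⟨e, hde, N, hN⟩ := exists_ge_coe_addSubmonoid_eq_compl_upperSetColon hd
  have mem_N (w : σ →₀ ℕ) : w ∈ N ↔ w + e ∉ U := Set.ext_iff.1 hN w
  have N_lower : IsLowerSet (N : Set (σ →₀ ℕ)) := hN ▸ (upperSetColon U e).upper.compl
  refine ⟨e, hde, (Set.toFinite {i | Finsupp.single i 1 ∉ N}).toFinset, fun w => ?_⟩
  rw [← not_iff_not, ← mem_N, mem_iff_single_mem_of_isLowerSet N_lower]
  simp [not_imp_comm]

end Finsupp

section MonomialIdeal

variable {R σ : Type*} [CommSemiring R]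

variable (R) in
/-- The monomial ideal generated by the monomials with exponents in `A`. -/
noncomputable def monomialIdeal (A : Set (σ →₀ ℕ)) : Ideal (MvPolynomial σ R) :=
  Ideal.span ((fun d => monomial d (1 : R)) '' A)

theorem mem_monomialIdeal_iff {A : Set (σ →₀ ℕ)} {f : MvPolynomial σ R} :
    f ∈ monomialIdeal R A ↔ ∀ m ∈ f.support, m ∈ upperClosure A :=
  mem_ideal_span_monomial_image

theorem monomial_mem_monomialIdeal_iff [Nontrivial R] {A : Set (σ →₀ ℕ)} {d : σ →₀ ℕ} :
    monomial d 1 ∈ monomialIdeal R A ↔ d ∈ upperClosure A := by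
  classical
  simp [mem_monomialIdeal_iff, support_monomial]

theorem monomialIdeal_le_iff [Nontrivial R] {A B : Set (σ →₀ ℕ)} :
    monomialIdeal R B ≤ monomialIdeal R A ↔ ∀ d ∈ B, d ∈ upperClosure A := by
  rw [monomialIdeal, Ideal.span_le, Set.image_subset_iff]
  exact forall₂_congr fun _ _ => monomial_mem_monomialIdeal_iff

theorem mul_monomial_mem_monomialIdeal_iff {A : Set (σ →₀ ℕ)} {e : σ →₀ ℕ}
    {f : MvPolynomial σ R} :
    f * monomial e 1 ∈ monomialIdeal R A ↔ ∀ m ∈ f.support, m + e ∈ upperClosure A := by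
  have support_eq : (f * monomial e 1).support = f.support.map (addRightEmbedding e) :=
    AddMonoidAlgebra.support_coeff_mul_single f _ (by simp) _
  simp [mem_monomialIdeal_iff, support_eq]

theorem colon_monomialIdeal_eq_span_X {A : Set (σ →₀ ℕ)} {e : σ →₀ ℕ} {S : Set σ}
    (h : ∀ w, w + e ∈ upperClosure A ↔ ∃ i ∈ S, w i ≠ 0) :
    (monomialIdeal R A).colon {monomial e (1 : R)} = Ideal.span (X '' S) := by
  ext f
  rw [Submodule.mem_colon_singleton, smul_eq_mul, mul_monomial_mem_monomialIdeal_iff,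
    mem_ideal_span_X_image]
  simp only [h]

theorem span_X_image_eq_ker_killCompl (S : Set σ) :
    Ideal.span (X '' S : Set (MvPolynomial σ R)) =
      RingHom.ker (killCompl (R := R) (Subtype.val_injective (p := (· ∉ S)))) := by
  ext f
  rw [mem_ideal_span_X_image, RingHom.mem_ker, MvPolynomial.ext_iff]
  simp only [coeff_killCompl, coeff_zero]
  refine ⟨fun h s => by_contra fun hs => ?_, fun h m hm => ?_⟩
  · obtain ⟨i, hi, hne⟩ := h _ (mem_support_iff.2 hs)
    exact hne (Finsupp.mapDomain_of_notMem_range s i (by simpa using hi))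
  · by_contra! hmS
    have support_subset : (m.support : Set σ) ⊆ Set.range (Subtype.val : {i // i ∉ S} → σ) := by
      exact fun i hi => ⟨⟨i, fun hiS => Finsupp.mem_support_iff.1 hi (hmS i hiS)⟩, rfl⟩
    rw [mem_support_iff, ← m.mapDomain_comapDomain _ Subtype.val_injective support_subset] at hm
    exact hm (h _)

end MonomialIdeal

section AssociatedPrime

theorem mem_associatedPrimes_quotient_of_colon_singleton_eq {R : Type*} [CommRing R]
    {I p : Ideal R} {a : R} (hp : p.IsPrime) (h : I.colon {a} = p) :
    p ∈ associatedPrimes R (R ⧸ I) := by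
  refine ⟨hp, Ideal.Quotient.mk I a, ?_⟩
  have colon_eq : (⊥ : Submodule R (R ⧸ I)).colon {Ideal.Quotient.mk I a} = I.colon {a} := by
    ext r
    rw [Submodule.mem_colon_singleton, Submodule.mem_bot, Submodule.mem_colon_singleton]
    exact Ideal.Quotient.eq_zero_iff_mem
  rw [colon_eq, h, hp.radical]

theorem isPrime_span_X_image {R σ : Type*} [CommRing R] [IsDomain R] (S : Set σ) :
    (Ideal.span (X '' S : Set (MvPolynomial σ R))).IsPrime := by
  rw [span_X_image_eq_ker_killCompl]
  exact RingHom.ker_isPrime _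

end AssociatedPrime

section MonomialLocalization

variable {σ : Type*} [DecidableEq σ]

/-- The monomial localization map over any coefficient semiring and in any variables;
`monLocMap K S` unfolds to the case of a field and variables indexed by `Fin n`. -/
noncomputable def monomialLocalization (R : Type*) [CommSemiring R] (S : Finset σ) :
    MvPolynomial σ R →ₐ[R] MvPolynomial {i // i ∈ S} R :=
  aeval fun i => if h : i ∈ S then X ⟨i, h⟩ else 1

variable {R : Type*} [CommSemiring R]

theorem monomialLocalization_monomial (S : Finset σ) (d : σ →₀ ℕ) :
    monomialLocalization R S (monomial d 1) = monomial (d.subtypeDomain (· ∈ S)) 1 := by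
  induction d using Finsupp.induction_linear with
  | zero => simp
  | add d e hd he =>
    rw [Finsupp.subtypeDomain_add, ← mul_one (1 : R), ← monomial_mul, ← monomial_mul, map_mul,
      hd, he]
  | single i k =>
    rw [← X_pow_eq_monomial, map_pow, monomialLocalization, aeval_X]
    split_ifs with hi
    · have subtypeDomain_eq : (Finsupp.single i k).subtypeDomain (· ∈ S) =
          Finsupp.single ⟨i, hi⟩ k := by
        ext j
        simp [Finsupp.single_apply, Subtype.ext_iff]
      rw [subtypeDomain_eq, X_pow_eq_monomial]
    · have subtypeDomain_eq : (Finsupp.single i k).subtypeDomain (· ∈ S) = 0 :=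
        Finsupp.subtypeDomain_eq_zero_iff'.2 fun _ hj =>
          Finsupp.single_eq_of_ne (ne_of_mem_of_not_mem hj hi)
      rw [subtypeDomain_eq, one_pow, monomial_zero', C_1]

theorem map_monomialLocalization_monomialIdeal (S : Finset σ) (A : Set (σ →₀ ℕ)) :
    (monomialIdeal R A).map (monomialLocalization R S) =
      monomialIdeal R (Finsupp.subtypeDomain (· ∈ S) '' A) := by
  simp only [monomialIdeal, Ideal.map_span, Set.image_image, monomialLocalization_monomial]

theorem map_monomialLocalization_le_iff [Nontrivial R] {S : Finset σ} {A B : Set (σ →₀ ℕ)} :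
    (monomialIdeal R B).map (monomialLocalization R S) ≤
        (monomialIdeal R A).map (monomialLocalization R S) ↔
      ∀ d ∈ B, ∃ a ∈ A, ∀ i ∈ S, a i ≤ d i := by
  simp only [map_monomialLocalization_monomialIdeal, monomialIdeal_le_iff, mem_upperClosure,
    Set.forall_mem_image, Set.exists_mem_image, Finsupp.le_def, Finsupp.subtypeDomain_apply,
    Subtype.forall]

end MonomialLocalization

theorem stmt_8_general {R σ : Type*} [CommRing R] [IsDomain R] [Finite σ] [DecidableEq σ]
    (A B : Set (σ →₀ ℕ))
    (h : ∀ S : Finset σ,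
      Ideal.span (X '' (S : Set σ)) ∈
        associatedPrimes (MvPolynomial σ R) (MvPolynomial σ R ⧸ monomialIdeal R A) →
      (monomialIdeal R B).map (monomialLocalization R S) ≤
        (monomialIdeal R A).map (monomialLocalization R S)) :
    monomialIdeal R B ≤ monomialIdeal R A := by
  rw [monomialIdeal_le_iff]
  intro d hdB
  by_contra hd
  obtain ⟨e, hde, S, hS⟩ := exists_ge_forall_add_mem_iff hd
  have span_mem_ass := mem_associatedPrimes_quotient_of_colon_singleton_eq
    (isPrime_span_X_image (R := R) (S : Set σ)) (colon_monomialIdeal_eq_span_X hS)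
  obtain ⟨a, haA, had⟩ := map_monomialLocalization_le_iff.1 (h S span_mem_ass) d hdB
  have filter_add_mem : a.filter (· ∉ S) + e ∈ upperClosure A := by
    refine ⟨a, haA, fun i => ?_⟩
    by_cases hi : i ∈ S
    · simpa [hi] using (had i hi).trans (hde i)
    · simp [hi]
  obtain ⟨i, hi, hne⟩ := (hS _).1 filter_add_mem
  simp [hi] at hne

theorem stmt_8 {K : Type*} [Field K] {n : ℕ} (I J : Ideal (MvPolynomial (Fin n) K))
    (hI : IsMonomialIdeal I) (hJ : IsMonomialIdeal J)
    (h : ∀ S : Finset (Fin n),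
      Ideal.span ((fun i => (X i : MvPolynomial (Fin n) K)) '' ↑S) ∈
        associatedPrimes (MvPolynomial (Fin n) K) (MvPolynomial (Fin n) K ⧸ I) →
      Ideal.map (monLocMap K S) J ≤ Ideal.map (monLocMap K S) I) :
    J ≤ I := by
  obtain ⟨A, rfl⟩ := hI
  obtain ⟨B, rfl⟩ := hJ
  exact stmt_8_general A B h
end

section
/- Let K be a field, S = K[x_1,x_2,x_3], and let m, r ≥ 1 be integers. Let L = (x_1^{m+3}, x_2^{m+3}, x_1^{m+2}x_2, x_1 x_2^{m+2}, x_1^{m+1} x_2^{2} x_3^{r}) ⊂ S. Then for every integer s ≥ m+2, (L^s :_S L) = L^{s-1}. -/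
open MvPolynomial

/-!
Put `M = (x₁, x₂)` and `N = (x₁^(m+2), x₂^(m+2))`; then `N M ⊆ L ⊆ M^(m+3)`. More generally let `M`
be generated by `d` variables and `N` by their `(n+1)`-st powers. By the pigeonhole principle a
monomial in the `d` variables of degree greater than `d n` is divisible by the `(n+1)`-st power of
one of them, so `M^(n+1+k) = N M^k` as soon as `d n ≤ n + k`, and by iteration
`M^((n+1)t+k) = N^t M^k`. Taking `k = t` shows `M^((n+2)t) = (N M)^t`, so every ideal `L` with
`N M ⊆ L ⊆ M^(n+2)` satisfies `L^t = M^((n+2)t)` once `d n ≤ n + t`. For powers of `M` the colon is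
read off from degrees: if `f x^(n+2) ∈ M^((n+2)(t+1))` for one of the `d` variables `x`, then
`f ∈ M^((n+2)t)`.
-/

section CommSemiring

variable {ι A : Type*} [CommSemiring A]

theorem span_image_pow_eq_span_prod (x : ι → A) (s : Set ι) (k : ℕ) :
    Ideal.span (x '' s) ^ k =
      Ideal.span ((·.prod (x · ^ ·)) '' {a : ι →₀ ℕ | a.degree = k ∧ ↑a.support ⊆ s}) := by
  rw [Ideal.span, Submodule.span_pow, Finsupp.image_pow_eq_finsuppProd_image]

theorem degree_eq_sum_of_support_subset {M : Type*} [AddCommMonoid M] {s : Finset ι} {a : ι →₀ M}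
    (ha : a.support ⊆ s) :
    a.degree = ∑ i ∈ s, a i :=
  Finsupp.sum_of_support_subset a ha (fun _ d => d) fun _ _ => rfl

theorem exists_lt_of_card_mul_lt_degree {s : Finset ι} {a : ι →₀ ℕ} (ha : a.support ⊆ s) {n : ℕ}
    (h : s.card * n < a.degree) : ∃ i ∈ s, n < a i := by
  apply Finset.exists_lt_of_sum_lt
  rwa [Finset.sum_const, smul_eq_mul, ← degree_eq_sum_of_support_subset ha]

theorem span_image_pow_le_mul (x : ι → A) {s : Finset ι} {n k : ℕ} (h : s.card * n ≤ n + k) :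
    Ideal.span (x '' s) ^ (n + 1 + k) ≤
      Ideal.span ((x · ^ (n + 1)) '' s) * Ideal.span (x '' s) ^ k := by
  rw [span_image_pow_eq_span_prod, span_image_pow_eq_span_prod, Ideal.span_le]
  rintro _ ⟨a, ⟨hdeg, hsupp⟩, rfl⟩
  obtain ⟨i, hi, hai⟩ := exists_lt_of_card_mul_lt_degree (n := n) (Finset.coe_subset.1 hsupp)
    (by omega)
  obtain ⟨b, rfl⟩ : ∃ b, a = Finsupp.single i (n + 1) + b :=
    exists_add_of_le (Finsupp.single_le_iff.2 hai)
  have hprod : (Finsupp.single i (n + 1) + b).prod (x · ^ ·) =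
      x i ^ (n + 1) * b.prod (x · ^ ·) := by
    classical
    rw [Finsupp.prod_add_index' (by simp) (by simp [pow_add]), Finsupp.prod_single_index (by simp)]
  have hb : b.degree = k := by simpa using hdeg
  have hbs : (b.support : Set ι) ⊆ s :=
    (Finset.coe_subset.2 (Finsupp.support_mono le_add_self)).trans hsupp
  dsimp only
  rw [hprod]
  exact Ideal.mul_mem_mul (Ideal.subset_span ⟨i, hi, rfl⟩) (Ideal.subset_span ⟨b, ⟨hb, hbs⟩, rfl⟩)

theorem span_image_pow_le_pow_mul (x : ι → A) {s : Finset ι} {n k : ℕ} (h : s.card * n ≤ n + k)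
    (t : ℕ) :
    Ideal.span (x '' s) ^ ((n + 1) * t + k) ≤
      Ideal.span ((x · ^ (n + 1)) '' s) ^ t * Ideal.span (x '' s) ^ k := by
  induction t with
  | zero => simp
  | succ t ih =>
    calc Ideal.span (x '' s) ^ ((n + 1) * (t + 1) + k)
      _ = Ideal.span (x '' s) ^ (n + 1 + ((n + 1) * t + k)) := by ring_nf
      _ ≤ Ideal.span ((x · ^ (n + 1)) '' s) * Ideal.span (x '' s) ^ ((n + 1) * t + k) :=
        span_image_pow_le_mul x (by omega)
      _ ≤ Ideal.span ((x · ^ (n + 1)) '' s) *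
          (Ideal.span ((x · ^ (n + 1)) '' s) ^ t * Ideal.span (x '' s) ^ k) :=
        Ideal.mul_mono_right ih
      _ = Ideal.span ((x · ^ (n + 1)) '' s) ^ (t + 1) * Ideal.span (x '' s) ^ k := by
        rw [pow_succ', mul_assoc]

theorem pow_eq_span_image_pow {x : ι → A} {s : Finset ι} {n t : ℕ} {L : Ideal A}
    (hlower : Ideal.span ((x · ^ (n + 1)) '' s) * Ideal.span (x '' s) ≤ L)
    (hupper : L ≤ Ideal.span (x '' s) ^ (n + 2)) (ht : s.card * n ≤ n + t) :
    L ^ t = Ideal.span (x '' s) ^ ((n + 2) * t) := by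
  apply le_antisymm
  · rw [pow_mul]
    exact Ideal.pow_right_mono hupper t
  · calc Ideal.span (x '' s) ^ ((n + 2) * t)
      _ = Ideal.span (x '' s) ^ ((n + 1) * t + t) := by ring_nf
      _ ≤ Ideal.span ((x · ^ (n + 1)) '' s) ^ t * Ideal.span (x '' s) ^ t :=
        span_image_pow_le_pow_mul x ht t
      _ = (Ideal.span ((x · ^ (n + 1)) '' s) * Ideal.span (x '' s)) ^ t := (mul_pow _ _ t).symm
      _ ≤ L ^ t := Ideal.pow_right_mono hlower t

theorem pow_le_colon_pow_succ (L : Ideal A) (t : ℕ) : L ^ t ≤ (L ^ (t + 1)).colon L := by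
  intro f hf
  refine Submodule.mem_colon.2 fun g hg => ?_
  rw [pow_succ]
  exact Ideal.mul_mem_mul hf hg

theorem span_pair_pow_mul_span_pair_le (x y z : A) (n : ℕ) :
    Ideal.span {x ^ n, y ^ n} * Ideal.span {x, y} ≤
      Ideal.span {x ^ (n + 1), y ^ (n + 1), x ^ n * y, x * y ^ n, z} := by
  rw [Ideal.span_pair_mul_span_pair, ← pow_succ, ← pow_succ, mul_comm _ x]
  apply Ideal.span_mono
  grind

theorem pow_mul_pow_mem_span_pair_pow (x y : A) {a b k : ℕ} (h : k ≤ a + b) :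
    x ^ a * y ^ b ∈ Ideal.span {x, y} ^ k := by
  apply Ideal.pow_le_pow_right h
  rw [pow_add]
  exact Ideal.mul_mem_mul (Ideal.pow_mem_pow (Ideal.subset_span (by simp)) a)
    (Ideal.pow_mem_pow (Ideal.subset_span (by simp)) b)

theorem span_le_span_pair_pow (x y z : A) {n a b : ℕ} (h : n + 1 ≤ a + b) :
    Ideal.span {x ^ (n + 1), y ^ (n + 1), x ^ n * y, x * y ^ n, x ^ a * y ^ b * z} ≤
      Ideal.span {x, y} ^ (n + 1) := by
  rw [Ideal.span_le]
  rintro _ (rfl | rfl | rfl | rfl | rfl)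
  · simpa using pow_mul_pow_mem_span_pair_pow x y (add_zero (n + 1)).ge
  · simpa using pow_mul_pow_mem_span_pair_pow x y (zero_add (n + 1)).ge
  · simpa using pow_mul_pow_mem_span_pair_pow x y (a := n) (b := 1) le_rfl
  · simpa using pow_mul_pow_mem_span_pair_pow x y (a := 1) (b := n) (add_comm n 1).le
  · exact Ideal.mul_mem_right z _ (pow_mul_pow_mem_span_pair_pow x y h)

end CommSemiring

section MvPolynomial

variable {σ R : Type*} [CommSemiring R] {s : Finset σ}

theorem mem_span_X_image_pow_iff {k : ℕ} {f : MvPolynomial σ R} :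
    f ∈ Ideal.span (X '' (s : Set σ)) ^ k ↔ ∀ u ∈ f.support, k ≤ ∑ i ∈ s, u i := by
  classical
  have hmonomial (a : σ →₀ ℕ) : a.prod (X · ^ ·) = (monomial a 1 : MvPolynomial σ R) := by
    rw [monomial_eq, C_1, one_mul]
  simp only [span_image_pow_eq_span_prod, hmonomial, mem_ideal_span_monomial_image]
  refine forall₂_congr fun u _ => ⟨?_, fun h => ?_⟩
  · rintro ⟨a, ⟨rfl, ha⟩, hau⟩
    rw [degree_eq_sum_of_support_subset (Finset.coe_subset.1 ha)]
    exact Finset.sum_le_sum fun i _ => hau i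
  · have hsupp : (u.filter (· ∈ s)).support ⊆ s := by
      simp [Finsupp.support_filter, Finset.subset_iff]
    have hdeg : (u.filter (· ∈ s)).degree = ∑ i ∈ s, u i :=
      (degree_eq_sum_of_support_subset hsupp).trans
        (Finset.sum_congr rfl fun i hi => Finsupp.filter_apply_pos _ _ hi)
    obtain ⟨a, hau, ha⟩ := Finsupp.exists_le_degree_eq _ k (h.trans_eq hdeg.symm)
    have hle : u.filter (· ∈ s) ≤ u := fun i => by
      rw [Finsupp.filter_apply]
      split_ifs <;> simp
    exact ⟨a, ⟨ha, Finset.coe_subset.2 ((Finsupp.support_mono hau).trans hsupp)⟩, hau.trans hle⟩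

theorem mem_span_X_image_pow_of_mul_X_pow_mem {i : σ} (hi : i ∈ s) {k d : ℕ}
    {f : MvPolynomial σ R} (h : f * X i ^ d ∈ Ideal.span (X '' (s : Set σ)) ^ (k + d)) :
    f ∈ Ideal.span (X '' (s : Set σ)) ^ k := by
  classical
  rw [mem_span_X_image_pow_iff] at h ⊢
  intro u hu
  have hud : u + Finsupp.single i d ∈ (f * X i ^ d).support := by
    rw [mem_support_iff] at hu ⊢
    rwa [X_pow_eq_monomial, coeff_mul_monomial, mul_one]
  have hsum : ∑ j ∈ s, (u + Finsupp.single i d) j = ∑ j ∈ s, u j + d := by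
    simp [Finset.sum_add_distrib, Finsupp.single_apply, hi]
  have hdeg := h _ hud
  omega

theorem stmt_11_general (hs : s.Nonempty) {n k : ℕ} {L : Ideal (MvPolynomial σ R)}
    (hlower : Ideal.span ((X · ^ (n + 1)) '' (s : Set σ)) * Ideal.span (X '' (s : Set σ)) ≤ L)
    (hupper : L ≤ Ideal.span (X '' (s : Set σ)) ^ (n + 2)) (hk : s.card * n < n + k) :
    (L ^ k).colon L = L ^ (k - 1) := by
  obtain ⟨i, hi⟩ := hs
  have hcard : n ≤ s.card * n := Nat.le_mul_of_pos_left n (Finset.card_pos.2 ⟨i, hi⟩)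
  obtain ⟨t, rfl⟩ : ∃ t, k = t + 1 := Nat.exists_eq_add_one.2 (by omega)
  rw [Nat.add_sub_cancel]
  apply le_antisymm
  · intro f hf
    have hXL : X i ^ (n + 2) ∈ L := hlower <| Ideal.mul_mem_mul
      (Ideal.subset_span ⟨i, hi, rfl⟩) (Ideal.subset_span ⟨i, hi, rfl⟩)
    have hfX : f * X i ^ (n + 2) ∈ L ^ (t + 1) := Submodule.mem_colon.1 hf _ hXL
    rw [pow_eq_span_image_pow hlower hupper (by omega)] at hfX ⊢
    exact mem_span_X_image_pow_of_mul_X_pow_mem hi hfX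
  · exact pow_le_colon_pow_succ L t

end MvPolynomial

theorem stmt_11 {K : Type*} [Field K] (m r : ℕ) (hm : 1 ≤ m) (hr : 1 ≤ r)
    (L : Ideal (MvPolynomial (Fin 3) K))
    (hL : L = Ideal.span {X 0 ^ (m + 3), X 1 ^ (m + 3), X 0 ^ (m + 2) * X 1,
      X 0 * X 1 ^ (m + 2), X 0 ^ (m + 1) * X 1 ^ 2 * X 2 ^ r}) :
    ∀ s : ℕ, m + 2 ≤ s → (L ^ s).colon L = L ^ (s - 1) := by
  subst hL
  intro s hs
  refine stmt_11_general (s := {0, 1}) (n := m + 1) (by simp) ?_ ?_ (by simp; omega)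
  · simpa [Set.image_pair] using span_pair_pow_mul_span_pair_le (X 0) (X 1) _ (m + 2)
  · simpa [Set.image_pair] using
      span_le_span_pair_pow (X 0) (X 1) (X 2 ^ r) (n := m + 2) (a := m + 1) (b := 2) le_rfl
end

section
/- Let R be a commutative Noetherian ring, let I be an ideal of R, and let k ≥ 1 be an integer. Suppose ℓ0 is the strong persistence index of I and ℓ0' is the strong persistence index of I^k. Then ℓ0' ≤ ℓ0. -/
/-- `l` is the strong persistence index of `I`: `l` is the smallest positive integer such that
`(I^(k+1) : I) = I^k` for all `k ≥ l`. -/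
def IsStrongPersistenceIndex {R : Type*} [CommRing R] (I : Ideal R) (l : ℕ) : Prop :=
  0 < l ∧ (∀ k, l ≤ k → (I ^ (k + 1)).colon I = I ^ k) ∧
    ∀ l', 0 < l' → (∀ k, l' ≤ k → (I ^ (k + 1)).colon I = I ^ k) → l ≤ l'

/-!
Colon by a product is an iterated colon, `(A : JK) = ((A : K) : J)`, so the equalities
`(I ^ (m + 1) : I) = I ^ m` for `m ≥ l` telescope to `(I ^ (n + j) : I ^ j) = I ^ n` for `n ≥ l`.
Taking `n = k * m` and `j = k`, the ideal `I ^ k` has the required property at every `m` with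
`l ≤ k * m`, that is, from `⌈l / k⌉` on.
-/

section Colon

variable {R : Type*}

theorem colon_smul_eq_colon_colon [Semiring R] {M : Type*} [AddCommMonoid M] [Module R M]
    (N P : Submodule R M) (J : Ideal R) :
    N.colon (J • P : Submodule R M) = (N.colon P).colon J := by
  ext r
  simp only [Submodule.mem_colon, SetLike.mem_coe, smul_eq_mul, mul_smul]
  refine ⟨fun h a ha p hp ↦ h _ (Submodule.smul_mem_smul ha hp), fun h x hx ↦ ?_⟩
  induction hx using Submodule.smul_induction_on' with
  | smul a ha p hp => exact h a ha p hp
  | add x _ y _ hx hy => simpa only [smul_add] using N.add_mem hx hy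

variable [CommSemiring R] {I : Ideal R} {l : ℕ}

theorem colon_pow_eq_of_colon_succ_eq {A : ℕ → Ideal R}
    (h : ∀ m, l ≤ m → (A (m + 1)).colon I = A m) {n : ℕ} (hn : l ≤ n) (j : ℕ) :
    (A (n + j)).colon (I ^ j : Ideal R) = A n := by
  induction j with
  | zero => rw [pow_zero, Ideal.one_eq_top, Submodule.top_coe, Submodule.colon_univ, add_zero]
  | succ j ih =>
    calc (A (n + (j + 1))).colon (I ^ (j + 1) : Ideal R)
        = ((A (n + j + 1)).colon I).colon (I ^ j : Ideal R) := by
          rw [pow_succ, ← smul_eq_mul, colon_smul_eq_colon_colon, add_assoc]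
      _ = (A (n + j)).colon (I ^ j : Ideal R) := by rw [h _ (Nat.le_add_right_of_le hn)]
      _ = A n := ih

theorem colon_pow_pow_succ_eq (h : ∀ m, l ≤ m → (I ^ (m + 1)).colon I = I ^ m)
    {k m : ℕ} (hm : l ≤ k * m) :
    ((I ^ k) ^ (m + 1)).colon (I ^ k : Ideal R) = (I ^ k) ^ m := by
  rw [← pow_mul, ← pow_mul, Nat.mul_succ]
  exact colon_pow_eq_of_colon_succ_eq h hm k

end Colon

theorem stmt_15_general {R : Type*} [CommRing R] (I : Ideal R) (k : ℕ) (hk : 1 ≤ k)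
    (l0 l0' : ℕ) (h : IsStrongPersistenceIndex I l0)
    (h' : IsStrongPersistenceIndex (I ^ k) l0') :
    l0' ≤ l0 ⌈/⌉ k := by
  obtain ⟨l0_pos, colon_eq, -⟩ := h
  obtain ⟨-, -, l0'_le⟩ := h'
  have le_mul_ceilDiv : l0 ≤ k * (l0 ⌈/⌉ k) := (ceilDiv_le_iff_le_mul hk).1 le_rfl
  have ceilDiv_pos : 0 < l0 ⌈/⌉ k := Nat.pos_of_mul_pos_left (l0_pos.trans_le le_mul_ceilDiv)
  exact l0'_le _ ceilDiv_pos fun m hm ↦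
    colon_pow_pow_succ_eq colon_eq ((ceilDiv_le_iff_le_mul hk).1 hm)

theorem stmt_15 {R : Type*} [CommRing R] [IsNoetherianRing R] (I : Ideal R) (k : ℕ) (hk : 1 ≤ k)
    (l0 l0' : ℕ) (h : IsStrongPersistenceIndex I l0)
    (h' : IsStrongPersistenceIndex (I ^ k) l0') :
    l0' ≤ l0 :=
  (stmt_15_general I k hk l0 l0' h h').trans <|
    (ceilDiv_le_iff_le_mul hk).2 (Nat.le_mul_of_pos_left l0 hk)
end

section
/- Let K be a field, R = K[x_1,…,x_n], and let I ⊂ R be a monomial ideal. Given positive integers w_1,…,w_n, let h : R → R be the K-algebra homomorphism with h(x_i) = x_i^{w_i}, and let I_W be the ideal generated by h(I). Then I has the phenomenon of fluctuation in colon powers if and only if I_W has the phenomenon of fluctuation in colon powers. -/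
open MvPolynomial

/-- `I` has the phenomenon of fluctuation in colon powers. -/
def HasFluctuationInColonPowers {R : Type*} [CommRing R] (I : Ideal R) : Prop :=
  ∃ a b c : ℕ, 0 < a ∧ a < b ∧ b < c ∧
    (((I ^ a).colon I = I ^ (a - 1) ∧ (I ^ b).colon I ≠ I ^ (b - 1) ∧
        (I ^ c).colon I = I ^ (c - 1)) ∨
      ((I ^ a).colon I ≠ I ^ (a - 1) ∧ (I ^ b).colon I = I ^ (b - 1) ∧
        (I ^ c).colon I ≠ I ^ (c - 1)))

/-!
The monomials `x ^ r` with `r i < w i` for all `i` form a basis of `R` over itself along the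
homomorphism `x i ↦ x i ^ w i`, by division with remainder of exponents. Along a free extension,
membership in an extended ideal is tested on coordinates. Hence extension of ideals is injective
and commutes with colons, as it does with powers, so each equality `I ^ k : I = I ^ (k - 1)` holds
for `I` exactly when it holds for `I_W`.
-/

section FreeAlgebra

variable {A B : Type*} [CommSemiring A] [CommSemiring B] [Algebra A B]

theorem mem_map_algebraMap_iff_forall_repr_mem {ι : Type*} (b : Module.Basis ι A B) {J : Ideal A}
    {f : B} : f ∈ J.map (algebraMap A B) ↔ ∀ i, b.repr f i ∈ J := by
  rw [← Submodule.restrictScalars_mem A, ← Ideal.smul_top_eq_map, ← b.span_eq,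
    Submodule.mem_ideal_smul_span_iff_exists_sum]
  constructor
  · rintro ⟨a, ha, rfl⟩ i
    rw [← Finsupp.linearCombination_apply, b.repr_linearCombination]
    exact ha i
  · exact fun h ↦ ⟨b.repr f, h, b.linearCombination_repr f⟩

theorem colon_map_algebraMap_of_free [Module.Free A B] (I J : Ideal A) :
    (J.map (algebraMap A B)).colon (I.map (algebraMap A B) : Ideal B) =
      (J.colon I).map (algebraMap A B) := by
  let b := Module.Free.chooseBasis A B
  have repr_mul (f : B) (a : A) (i) : b.repr (f * algebraMap A B a) i = b.repr f i * a := by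
    rw [mul_comm, ← Algebra.smul_def, map_smul, Finsupp.smul_apply, smul_eq_mul, mul_comm]
  have colon_map : (J.map (algebraMap A B)).colon (I.map (algebraMap A B) : Ideal B) =
      (J.map (algebraMap A B)).colon (algebraMap A B '' I) := Ideal.colon_span
  ext f
  simp only [colon_map, Submodule.mem_colon, Set.forall_mem_image, SetLike.mem_coe, smul_eq_mul,
    mem_map_algebraMap_iff_forall_repr_mem b, repr_mul]
  exact ⟨fun h i a ha ↦ h ha i, fun h a ha i ↦ h i a ha⟩

end FreeAlgebra

theorem hasFluctuationInColonPowers_map_algebraMap_iff {A B : Type*} [CommRing A] [CommRing B]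
    [Algebra A B] [Module.Free A B] [Nontrivial B] (I : Ideal A) :
    HasFluctuationInColonPowers (I.map (algebraMap A B)) ↔ HasFluctuationInColonPowers I := by
  have map_injective : Function.Injective (Ideal.map (algebraMap A B)) :=
    Function.LeftInverse.injective Ideal.comap_map_eq_self_of_faithfullyFlat
  have colon_eq_iff (k : ℕ) :
      (I.map (algebraMap A B) ^ k).colon (I.map (algebraMap A B) : Ideal B) =
        I.map (algebraMap A B) ^ (k - 1) ↔ (I ^ k).colon I = I ^ (k - 1) := by
    rw [← Ideal.map_pow, ← Ideal.map_pow, colon_map_algebraMap_of_free, map_injective.eq_iff]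
  simp only [HasFluctuationInColonPowers, ne_eq, colon_eq_iff]

/-- The ring homomorphism `φ` makes its codomain a free module over its domain, in analogy with
`RingHom.Flat`. Going through `φ` keeps this apart from the standard module structure when domain
and codomain are the same ring. -/
def IsFreeRingHom {A B : Type*} [CommRing A] [CommRing B] (φ : A →+* B) : Prop :=
  letI := φ.toAlgebra
  Module.Free A B

namespace IsFreeRingHom

variable {A B : Type*} [CommRing A] [CommRing B] {φ : A →+* B}

theorem of_addEquiv {ι : Type*} (e : (ι →₀ A) ≃+ B) (he : ∀ a v, e (a • v) = φ a * e v) :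
    IsFreeRingHom φ := by
  let _ := φ.toAlgebra
  let e' : (ι →₀ A) ≃ₗ[A] B := { e with map_smul' := he }
  exact Module.Free.of_basis (.ofRepr e'.symm)

theorem hasFluctuationInColonPowers_map_iff [Nontrivial B] (hφ : IsFreeRingHom φ) (I : Ideal A) :
    HasFluctuationInColonPowers (I.map φ) ↔ HasFluctuationInColonPowers I := by
  let _ := φ.toAlgebra
  have : Module.Free A B := hφ
  exact hasFluctuationInColonPowers_map_algebraMap_iff I

end IsFreeRingHom

section Weights

variable {σ : Type*} {w : σ → ℕ}

/-- The exponents all of whose entries are smaller than the corresponding weight; these are the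
possible remainders of exponents modulo the weights. -/
def reducedExponents (w : σ → ℕ) : Set (σ →₀ ℕ) := {r | ∀ i, r i < w i}

/-- Division with remainder of exponents by the weights: an exponent is `w • q + r` for a unique
quotient `q` and a unique reduced remainder `r`. -/
noncomputable def exponentDivModEquiv (hw : ∀ i, 0 < w i) :
    reducedExponents w × (σ →₀ ℕ) ≃ (σ →₀ ℕ) where
  toFun p := w • p.2 + p.1
  invFun e :=
    (⟨.onFinset e.support (fun i ↦ e i % w i) (by aesop), fun i ↦ Nat.mod_lt _ (hw i)⟩,
      .onFinset e.support (fun i ↦ e i / w i) (by aesop))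
  left_inv := by
    rintro ⟨⟨r, hr⟩, q⟩
    ext i
    · simp [Nat.mod_eq_of_lt (hr i)]
    · simp [Nat.mul_add_div (hw i), Nat.div_eq_of_lt (hr i)]
  right_inv e := by
    ext i
    simp [Nat.div_add_mod]

variable {K : Type*} [CommSemiring K]

/-- The `K`-algebra endomorphism `x i ↦ x i ^ w i` of the polynomial ring, which defines weighted
ideals. For constant `w` this is `MvPolynomial.expand`. -/
noncomputable def weightedExpand (w : σ → ℕ) : MvPolynomial σ K →ₐ[K] MvPolynomial σ K :=
  aeval fun i ↦ X i ^ w i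

theorem weightedExpand_monomial (w : σ → ℕ) (d : σ →₀ ℕ) (c : K) :
    weightedExpand w (monomial d c) = monomial (w • d) c := by
  rw [weightedExpand, aeval_monomial, monomial_eq, algebraMap_eq,
    Finsupp.prod_of_support_subset (w • d) (s := d.support) (by intro i; aesop) _ (by simp)]
  simp [Finsupp.prod, pow_mul]

/-- The isomorphism `v ↦ ∑ r, weightedExpand w (v r) * x ^ r` that exhibits the monomials with
reduced exponents as a basis along `weightedExpand w`. It is assembled from `K`-linear pieces by
relabelling the monomial basis. -/
noncomputable def reducedMonomialsEquiv (hw : ∀ i, 0 < w i) :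
    (reducedExponents w →₀ MvPolynomial σ K) ≃ₗ[K] MvPolynomial σ K :=
  Finsupp.mapRange.linearEquiv (basisMonomials σ K).repr ≪≫ₗ
    (Finsupp.curryLinearEquiv K).symm ≪≫ₗ
    Finsupp.domLCongr (exponentDivModEquiv hw) ≪≫ₗ (basisMonomials σ K).repr.symm

theorem reducedMonomialsEquiv_single_monomial (hw : ∀ i, 0 < w i) (r : reducedExponents w)
    (q : σ →₀ ℕ) (c : K) :
    reducedMonomialsEquiv hw (.single r (monomial q c)) = monomial (w • q + (r : σ →₀ ℕ)) c := by
  have repr_monomial (e : σ →₀ ℕ) : (basisMonomials σ K).repr (monomial e c) = .single e c := rfl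
  simp [reducedMonomialsEquiv, repr_monomial, exponentDivModEquiv, smul_monomial]

theorem reducedMonomialsEquiv_smul (hw : ∀ i, 0 < w i) (g : MvPolynomial σ K)
    (v : reducedExponents w →₀ MvPolynomial σ K) :
    reducedMonomialsEquiv hw (g • v) = weightedExpand w g * reducedMonomialsEquiv hw v := by
  induction v using Finsupp.induction_linear with
  | zero => simp
  | add u v hu hv => rw [smul_add, map_add, map_add, mul_add, hu, hv]
  | single r f =>
    induction g using MvPolynomial.induction_on' with
    | add g₁ g₂ h₁ h₂ => rw [add_smul, map_add, map_add, add_mul, h₁, h₂]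
    | monomial d a =>
      induction f using MvPolynomial.induction_on' with
      | add f₁ f₂ h₁ h₂ =>
        rw [Finsupp.single_add, smul_add, map_add, map_add, mul_add, h₁, h₂]
      | monomial q c =>
        rw [Finsupp.smul_single, smul_eq_mul, monomial_mul, weightedExpand_monomial,
          reducedMonomialsEquiv_single_monomial, reducedMonomialsEquiv_single_monomial,
          monomial_mul, smul_add w, add_assoc]

end Weights

theorem isFreeRingHom_weightedExpand {K σ : Type*} [CommRing K] {w : σ → ℕ}
    (hw : ∀ i, 0 < w i) :
    IsFreeRingHom (weightedExpand w : MvPolynomial σ K →ₐ[K] MvPolynomial σ K).toRingHom :=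
  .of_addEquiv (reducedMonomialsEquiv hw).toAddEquiv (reducedMonomialsEquiv_smul hw)

theorem stmt_16_general {K σ : Type*} [CommRing K] (I : Ideal (MvPolynomial σ K)) (w : σ → ℕ)
    (hw : ∀ i, 1 ≤ w i) :
    HasFluctuationInColonPowers I ↔ HasFluctuationInColonPowers (I.map (weightedExpand w)) := by
  cases subsingleton_or_nontrivial K
  · rw [Subsingleton.elim (Ideal.map _ I) I]
  · exact ((isFreeRingHom_weightedExpand hw).hasFluctuationInColonPowers_map_iff I).symm

theorem stmt_16 {K : Type*} [Field K] {n : ℕ} (I : Ideal (MvPolynomial (Fin n) K))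
    (hI : IsMonomialIdeal I) (w : Fin n → ℕ) (hw : ∀ i, 1 ≤ w i) :
    HasFluctuationInColonPowers I ↔
      HasFluctuationInColonPowers
        (Ideal.map (aeval fun i => (X i : MvPolynomial (Fin n) K) ^ w i) I) :=
  stmt_16_general I w hw
end

section
/- Let K be a field and n ≥ 2 an integer. Then there exist infinitely many monomial ideals in R = K[x_1,…,x_n] that have the phenomenon of fluctuation in colon powers; that is, the set of monomial ideals of R having the phenomenon of fluctuation in colon powers is infinite. -/
open MvPolynomial

/-!
If `I < J` are ideals with `I ^ 2 = J ^ 2`, then `I ^ k = J ^ k` for every `k ≥ 2`. Hence `J`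
multiplies `I` into `I ^ 2`, so `I ^ 2 : I` is strictly larger than `I`, while `I ^ 3 : I = I ^ 2`
as soon as `I` contains an element `u` such that `u * p ∈ J ^ 3` forces `p ∈ J ^ 2`. As `I : I` is
the whole ring, the colon powers of `I` then fluctuate at `1 < 2 < 3`.

Take `J = (x, y) ^ d` for two variables `x`, `y` and `d ≥ 4`, and drop the generator
`x ^ 2 * y ^ (d - 2)` to get `I`: every monomial of degree `2 * d` in `x`, `y` is still a product of
two of the remaining generators, and one can choose `u = x ^ d`. The least power of `x` in `I`
recovers `d`, so this gives infinitely many ideals.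
-/

section ColonPowers

variable {R : Type*} [CommSemiring R] {I J : Ideal R}

theorem le_colon_iff_mul_le {A : Ideal R} : J ≤ A.colon I ↔ J * I ≤ A := by
  rw [Ideal.mul_le]
  exact forall₂_congr fun _ _ => Submodule.mem_colon

theorem ideal_pow_eq_pow_of_sq_le_sq (hIJ : I ≤ J) (hsq : J ^ 2 ≤ I ^ 2) (k : ℕ) :
    I ^ (k + 2) = J ^ (k + 2) := by
  refine le_antisymm (Ideal.pow_right_mono hIJ _) ?_
  induction k with
  | zero => exact hsq
  | succ k ih =>
    calc
      J ^ (k + 3) = J * J ^ (k + 2) := pow_succ' J (k + 2)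
      _ ≤ J * I ^ (k + 2) := by gcongr
      _ = J * I * I ^ (k + 1) := by ring
      _ ≤ J * J * I ^ (k + 1) := by gcongr
      _ = J ^ 2 * I ^ (k + 1) := by ring
      _ ≤ I ^ 2 * I ^ (k + 1) := by gcongr
      _ = I ^ (k + 3) := by ring

end ColonPowers

theorem hasFluctuationInColonPowers_of_lt_of_sq_le_sq {R : Type*} [CommRing R] {I J : Ideal R}
    (hlt : I < J) (hsq : J ^ 2 ≤ I ^ 2) (hcolon : (J ^ 3).colon I ≤ J ^ 2) :
    HasFluctuationInColonPowers I := by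
  have hpow := ideal_pow_eq_pow_of_sq_le_sq hlt.le hsq
  have h_one : (I ^ 1).colon I = I ^ 0 := by simp
  have h_two : (I ^ 2).colon I ≠ I ^ 1 := by
    have hJ : J ≤ (I ^ 2).colon I := by
      rw [le_colon_iff_mul_le, hpow 0, zero_add, sq]
      exact Ideal.mul_mono_right hlt.le
    rw [pow_one]
    exact (hlt.trans_le hJ).ne'
  have h_three : (I ^ 3).colon I = I ^ 2 := by
    refine le_antisymm ?_ (le_colon_iff_mul_le.2 (pow_succ I 2).ge)
    rwa [hpow 0, hpow 1]
  exact ⟨1, 2, 3, one_pos, one_lt_two, Nat.lt_succ_self 2, .inl ⟨h_one, h_two, h_three⟩⟩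

section RestrictSupportIdeal

open scoped Pointwise

variable {σ R : Type*} [CommSemiring R] {s t u : Set (σ →₀ ℕ)}

theorem mem_restrictSupportIdeal {hs : IsUpperSet s} {p : MvPolynomial σ R} :
    p ∈ restrictSupportIdeal R s hs ↔ ∀ f ∈ p.support, f ∈ s :=
  Iff.rfl

theorem monomial_one_mem_restrictSupportIdeal [Nontrivial R] {hs : IsUpperSet s} {f : σ →₀ ℕ} :
    monomial f (1 : R) ∈ restrictSupportIdeal R s hs ↔ f ∈ s :=
  (monomial_mem_restrictSupport R).trans (or_iff_left one_ne_zero)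

theorem restrictSupportIdeal_eq_span (hs : IsUpperSet s) :
    restrictSupportIdeal R s hs = Ideal.span ((fun f => monomial f (1 : R)) '' s) := by
  ext p
  rw [mem_restrictSupportIdeal, mem_ideal_span_monomial_image]
  exact forall₂_congr fun f _ => ⟨fun hf => ⟨f, hf, le_rfl⟩, fun ⟨_, hg, hgf⟩ => hs hgf hg⟩

theorem span_monomial_mul_span_monomial :
    Ideal.span ((fun f => monomial f (1 : R)) '' s) * Ideal.span ((fun f => monomial f 1) '' t) =
      Ideal.span ((fun f => monomial f (1 : R)) '' (s + t)) := by
  rw [Ideal.span_mul_span']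
  congr 1
  exact (Set.image_image2_distrib fun f g => by simp only [monomial_mul, one_mul]).symm

theorem restrictSupportIdeal_mul_le (hs : IsUpperSet s) (ht : IsUpperSet t) (hu : IsUpperSet u)
    (h : s + t ⊆ u) :
    restrictSupportIdeal R s hs * restrictSupportIdeal R t ht ≤ restrictSupportIdeal R u hu := by
  simp only [restrictSupportIdeal_eq_span, span_monomial_mul_span_monomial]
  exact Ideal.span_mono (Set.image_mono h)

theorem restrictSupportIdeal_le_mul (hs : IsUpperSet s) (ht : IsUpperSet t) (hu : IsUpperSet u)
    (h : u ⊆ s + t) :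
    restrictSupportIdeal R u hu ≤ restrictSupportIdeal R s hs * restrictSupportIdeal R t ht := by
  simp only [restrictSupportIdeal_eq_span, span_monomial_mul_span_monomial]
  exact Ideal.span_mono (Set.image_mono h)

theorem add_mem_of_monomial_one_mul_mem_restrictSupportIdeal {hs : IsUpperSet s} {f g : σ →₀ ℕ}
    {p : MvPolynomial σ R} (h : monomial f 1 * p ∈ restrictSupportIdeal R s hs)
    (hg : g ∈ p.support) : f + g ∈ s := by
  refine mem_restrictSupportIdeal.1 h _ ?_
  rwa [mem_support_iff, coeff_monomial_mul, one_mul, ← mem_support_iff]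

end RestrictSupportIdeal

section GapIdeal

open scoped Pointwise

variable {σ : Type*} {i j : σ} {d e : ℕ}

/-- The exponents of the monomials in the ideal `(X i, X j) ^ d`, where `i ≠ j`. -/
def pairDegreeGE (i j : σ) (d : ℕ) : Set (σ →₀ ℕ) :=
  {f | d ≤ f i + f j}

/-- For `i ≠ j` and `d ≥ 3`, the exponents of the monomials in the ideal generated by all
`X i ^ a * X j ^ b` with `a + b = d`, except for `X i ^ 2 * X j ^ (d - 2)`. -/
def gapExponents (i j : σ) (d : ℕ) : Set (σ →₀ ℕ) :=
  {f | d ≤ f i + f j ∧ (f i = 2 → d < f i + f j)}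

theorem isUpperSet_pairDegreeGE : IsUpperSet (pairDegreeGE i j d) :=
  fun _ _ hfg hf => le_trans hf (add_le_add (hfg i) (hfg j))

theorem isUpperSet_gapExponents : IsUpperSet (gapExponents i j d) := by
  rintro f g hfg ⟨hf, hf_two⟩
  have hi := hfg i
  have hj := hfg j
  exact ⟨by omega, by omega⟩

theorem pairDegreeGE_add_subset :
    pairDegreeGE i j d + pairDegreeGE i j e ⊆ pairDegreeGE i j (d + e) := by
  rintro _ ⟨f, hf, g, hg, rfl⟩
  exact (Nat.add_le_add hf hg).trans_eq (add_add_add_comm _ _ _ _)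

theorem single_add_single_le (hij : i ≠ j) {f : σ →₀ ℕ} {a b : ℕ} (ha : a ≤ f i) (hb : b ≤ f j) :
    Finsupp.single i a + Finsupp.single j b ≤ f := by
  classical
  intro l
  simp only [Finsupp.add_apply, Finsupp.single_apply]
  split_ifs <;> simp_all

theorem exists_split_avoiding_two {q r : ℕ} (hd : 4 ≤ d) (hqr : d + d ≤ q + r) :
    ∃ a b, a ≤ q ∧ b ≤ r ∧ a + b = d ∧ a ≠ 2 ∧ (q - a = 2 → d < (q - a) + (r - b)) := by
  -- Use one variable only, unless that leaves the omitted exponent `(2, d - 2)` as a cofactor.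
  by_cases hq : d ≤ q
  · by_cases hgap : q = d + 2 ∧ r = d - 2
    · exact ⟨d - 1, 1, by omega⟩
    · exact ⟨d, 0, by omega⟩
  · by_cases hgap : q = 2
    · exact ⟨1, d - 1, by omega⟩
    · exact ⟨0, d, by omega⟩

theorem pairDegreeGE_subset_gapExponents_add (hij : i ≠ j) (hd : 4 ≤ d) :
    pairDegreeGE i j (d + d) ⊆ gapExponents i j d + gapExponents i j d := by
  intro f hf
  obtain ⟨a, b, ha, hb, hab, ha_two, hrest⟩ := exists_split_avoiding_two hd hf
  have hle := single_add_single_le hij ha hb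
  refine ⟨_, ?_, f - (Finsupp.single i a + Finsupp.single j b), ?_, add_tsub_cancel_of_le hle⟩
  · simp [gapExponents, hij, hab, ha_two]
  · have hdeg : d + d ≤ f i + f j := hf
    simp only [gapExponents, Set.mem_ofPred_eq, Finsupp.tsub_apply, Finsupp.add_apply,
      Finsupp.single_eq_same, Finsupp.single_eq_of_ne hij, Finsupp.single_eq_of_ne hij.symm,
      add_zero, zero_add]
    exact ⟨by omega, hrest⟩

variable (K : Type*) [CommSemiring K]

/-- The ideal `(X i, X j) ^ d`, where `i ≠ j`, described by the monomials it contains. -/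
noncomputable def pairDegreeIdeal (i j : σ) (d : ℕ) : Ideal (MvPolynomial σ K) :=
  restrictSupportIdeal K (pairDegreeGE i j d) isUpperSet_pairDegreeGE

/-- For `i ≠ j` and `d ≥ 3`, the ideal generated by all `X i ^ a * X j ^ b` with `a + b = d`, except
for `X i ^ 2 * X j ^ (d - 2)`, described by the monomials it contains. -/
noncomputable def gapIdeal (i j : σ) (d : ℕ) : Ideal (MvPolynomial σ K) :=
  restrictSupportIdeal K (gapExponents i j d) isUpperSet_gapExponents

theorem pairDegreeIdeal_mul_le :
    pairDegreeIdeal K i j d * pairDegreeIdeal K i j e ≤ pairDegreeIdeal K i j (d + e) :=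
  restrictSupportIdeal_mul_le _ _ _ pairDegreeGE_add_subset

theorem pairDegreeIdeal_cube_le :
    pairDegreeIdeal K i j d ^ 3 ≤ pairDegreeIdeal K i j (d + (d + d)) := by
  rw [pow_succ', sq]
  exact (Ideal.mul_mono_right (pairDegreeIdeal_mul_le K)).trans (pairDegreeIdeal_mul_le K)

theorem pairDegreeIdeal_le_gapIdeal_sq (hij : i ≠ j) (hd : 4 ≤ d) :
    pairDegreeIdeal K i j (d + d) ≤ gapIdeal K i j d ^ 2 := by
  rw [sq]
  exact restrictSupportIdeal_le_mul _ _ _ (pairDegreeGE_subset_gapExponents_add hij hd)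

variable {K}

theorem mem_pairDegreeIdeal_of_X_pow_mul_mem (hij : i ≠ j) {p : MvPolynomial σ K}
    (hp : X i ^ d * p ∈ pairDegreeIdeal K i j (d + e)) : p ∈ pairDegreeIdeal K i j e := by
  intro f hf
  rw [X_pow_eq_monomial] at hp
  have hdeg := add_mem_of_monomial_one_mul_mem_restrictSupportIdeal hp hf
  simpa [pairDegreeGE, hij, add_assoc] using hdeg

variable [Nontrivial K]

theorem X_pow_mem_gapIdeal_iff (hij : i ≠ j) (hd : 3 ≤ d) :
    (X i ^ e : MvPolynomial σ K) ∈ gapIdeal K i j d ↔ d ≤ e := by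
  rw [X_pow_eq_monomial, gapIdeal, monomial_one_mem_restrictSupportIdeal]
  simp only [gapExponents, Set.mem_ofPred_eq, Finsupp.single_eq_same,
    Finsupp.single_eq_of_ne hij.symm, add_zero]
  omega

variable (K)

theorem gapIdeal_lt_pairDegreeIdeal (hij : i ≠ j) (hd : 2 ≤ d) :
    gapIdeal K i j d < pairDegreeIdeal K i j d := by
  refine SetLike.lt_iff_le_and_exists.2 ⟨fun p hp f hf => (hp hf).1,
    monomial (Finsupp.single i 2 + Finsupp.single j (d - 2)) 1, ?_, ?_⟩
  · rw [pairDegreeIdeal, monomial_one_mem_restrictSupportIdeal]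
    simp [pairDegreeGE, hij, hd]
  · rw [gapIdeal, monomial_one_mem_restrictSupportIdeal]
    simp [gapExponents, hij, hd]

theorem gapIdeal_injective (hij : i ≠ j) :
    Function.Injective fun k => gapIdeal K i j (k + 3) := by
  intro k l hkl
  have hiff (e : ℕ) : k + 3 ≤ e ↔ l + 3 ≤ e := by
    rw [← X_pow_mem_gapIdeal_iff (K := K) hij (Nat.le_add_left 3 k),
      ← X_pow_mem_gapIdeal_iff (K := K) hij (Nat.le_add_left 3 l)]
    exact Iff.of_eq (congrArg (X i ^ e ∈ ·) hkl)
  have hle := (hiff (l + 3)).2 le_rfl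
  have hge := (hiff (k + 3)).1 le_rfl
  omega

end GapIdeal

theorem hasFluctuationInColonPowers_gapIdeal {σ : Type*} {i j : σ} {d : ℕ} (K : Type*) [CommRing K]
    [Nontrivial K] (hij : i ≠ j) (hd : 4 ≤ d) :
    HasFluctuationInColonPowers (gapIdeal K i j d) := by
  have hlt : gapIdeal K i j d < pairDegreeIdeal K i j d :=
    gapIdeal_lt_pairDegreeIdeal K hij (by omega)
  have hle_sq : pairDegreeIdeal K i j (d + d) ≤ gapIdeal K i j d ^ 2 :=
    pairDegreeIdeal_le_gapIdeal_sq K hij hd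
  refine hasFluctuationInColonPowers_of_lt_of_sq_le_sq hlt ?_ fun p hp => ?_
  · exact (sq (pairDegreeIdeal K i j d)).le.trans ((pairDegreeIdeal_mul_le K).trans hle_sq)
  · have hX : X i ^ d ∈ gapIdeal K i j d := (X_pow_mem_gapIdeal_iff hij (by omega)).2 le_rfl
    have hmul : X i ^ d * p ∈ pairDegreeIdeal K i j d ^ 3 := by
      simpa only [smul_eq_mul, mul_comm] using Submodule.mem_colon.1 hp _ hX
    have hp_deg : p ∈ pairDegreeIdeal K i j (d + d) :=
      mem_pairDegreeIdeal_of_X_pow_mul_mem hij (pairDegreeIdeal_cube_le K hmul)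
    exact Ideal.pow_right_mono hlt.le 2 (hle_sq hp_deg)

theorem stmt_17_general (K σ : Type*) [CommRing K] [Nontrivial K] [Nontrivial σ] :
    {I : Ideal (MvPolynomial σ K) |
      (∃ S : Set (σ →₀ ℕ), I = Ideal.span ((fun d => monomial d (1 : K)) '' S)) ∧
        HasFluctuationInColonPowers I}.Infinite := by
  obtain ⟨i, j, hij⟩ := exists_pair_ne σ
  refine Set.infinite_of_injective_forall_mem
    ((gapIdeal_injective K hij).comp Nat.succ_injective) fun k => ⟨?_, ?_⟩
  · exact ⟨gapExponents i j (k + 4), restrictSupportIdeal_eq_span isUpperSet_gapExponents⟩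
  · exact hasFluctuationInColonPowers_gapIdeal K hij (Nat.le_add_left 4 k)

theorem stmt_17 {K : Type*} [Field K] (n : ℕ) (hn : 2 ≤ n) :
    {I : Ideal (MvPolynomial (Fin n) K) |
      IsMonomialIdeal I ∧ HasFluctuationInColonPowers I}.Infinite := by
  have : Nontrivial (Fin n) := Fin.nontrivial_iff_two_le.2 hn
  exact stmt_17_general K (Fin n)
end
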